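/- Let d be a positive even integer and n = d²/2. Then in R = 𝔽₂[x]/(xⁿ−1): (1) P_{d+1}(x) is a unit, with inverse P_{d+1}(x)⁻¹ = x·(1 + x^{d+1} + x^{2(d+1)} + ⋯ + x^{(d/2−1)(d+1)}) + x^{d/2+1}·(1 + x^{d+1} + x^{2(d+1)} + ⋯ + x^{(d/2−2)(d+1)}), and wt(P_{d+1}(x)⁻¹) = d − 1; (2) P_n(x) = P_{d+1}(x)·x^{d/2+1}·(1 + x^{d+1} + x^{2(d+1)} + ⋯ + x^{(d/2−2)(d+1)}) + (1 + x + x² + ⋯ + x^{d/2}) in R, and P_n(x) = P_{d+1}(x)⁻¹·(1 + x + x² + ⋯ + x^{d/2−1}) + (1 + x^{d+1} + x^{2(d+1)} + ⋯ + x^{(d/2−1)(d+1)}) in R. -/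

import Mathlib

open Polynomial

noncomputable section

/-- `R2 n` is the ring `𝔽₂[x]/(xⁿ − 1)`. -/
abbrev R2 (n : ℕ) : Type := AdjoinRoot (X ^ n - 1 : (ZMod 2)[X])

/-- The image of `x` in `𝔽₂[x]/(xⁿ − 1)`. -/
def xR (n : ℕ) : R2 n := AdjoinRoot.root _

/-- The quotient map `𝔽₂[x] → 𝔽₂[x]/(xⁿ − 1)`. -/
def mkR (n : ℕ) : (ZMod 2)[X] →+* R2 n := AdjoinRoot.mk _

lemma xR_pow_n (n : ℕ) : xR n ^ n = 1 := by
  have h : (AdjoinRoot.mk (X ^ n - 1 : (ZMod 2)[X])) (X ^ n - 1) = 0 := AdjoinRoot.mk_self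
  rw [map_sub, map_pow, AdjoinRoot.mk_X, map_one, sub_eq_zero] at h
  exact h

/-- The unique representative of degree `< n` of an element of `𝔽₂[x]/(xⁿ − 1)` (junk if `n = 0`). -/
def repP {n : ℕ} (u : R2 n) : (ZMod 2)[X] :=
  if h : n = 0 then 0
  else AdjoinRoot.modByMonicHom (by simpa using monic_X_pow_sub_C (1 : ZMod 2) h) u

/-- The Hamming weight of an element of `𝔽₂[x]/(xⁿ − 1)`: the number of nonzero coefficients
of its degree-`< n` representative. -/
def wt {n : ℕ} (u : R2 n) : ℕ := (repP u).support.card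

/-- Coefficient of the degree-`< n` representative, indexed by `ℤ/n`. -/
def coeffZ {n : ℕ} (u : R2 n) (i : ZMod n) : ZMod 2 := (repP u).coeff i.val

/-- The X-stabilizer space `C₂(a,b) = {(r·a, r·b) : r ∈ R}` of the GB code of `(a,b)`. -/
def C2set (n : ℕ) (a b : R2 n) : Set (R2 n × R2 n) := {p | ∃ r : R2 n, p = (r * a, r * b)}

/-- The space `C₁(a,b) = {(u,v) : u·b + v·a = 0}` of the GB code of `(a,b)`. -/
def C1set (n : ℕ) (a b : R2 n) : Set (R2 n × R2 n) := {p | p.1 * b + p.2 * a = 0}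

/-- The (X-side) minimum distance of the GB code of `(a,b)`. -/
def dGB (n : ℕ) (a b : R2 n) : ℕ :=
  sInf {k | ∃ p ∈ C1set n a b \ C2set n a b, wt p.1 + wt p.2 = k}

/-- `P_m(x) = 1 + x + ⋯ + x^{m−1}` as a polynomial over `𝔽₂`. -/
def PmP (m : ℕ) : (ZMod 2)[X] := ∑ i ∈ Finset.range m, X ^ i

/-- `P_m(x) = 1 + x + ⋯ + x^{m−1}` as an element of `𝔽₂[x]/(xⁿ − 1)`. -/
def PmR (n m : ℕ) : R2 n := ∑ i ∈ Finset.range m, xR n ^ i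

/-- The ring endomorphism of `𝔽₂[x]/(xⁿ − 1)` induced by `x ↦ x^d`. -/
def substHom (n d : ℕ) : R2 n →+* R2 n :=
  AdjoinRoot.lift (algebraMap (ZMod 2) (R2 n)) (xR n ^ d) (by
    simp only [eval₂_sub, eval₂_X_pow, eval₂_one]
    rw [← pow_mul, mul_comm d n, pow_mul, xR_pow_n, one_pow, sub_self])

/-- The Euclidean inner product on `𝔽₂²ⁿ`, in terms of pairs `(u₁, u₂)` of elements of
`𝔽₂[x]/(xⁿ − 1)` (representing the concatenated binary vector `(u₁ | u₂)`). -/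
def eucInner (n : ℕ) (p q : R2 n × R2 n) : ZMod 2 :=
  ∑ i ∈ Finset.range n,
    ((repP p.1).coeff i * (repP q.1).coeff i + (repP p.2).coeff i * (repP q.2).coeff i)

/-- The symplectic inner product of `u₁ + w·u₂` and `v₁ + w·v₂`, i.e.
`Σᵢ (u₁ᵢ·v₂ᵢ + u₂ᵢ·v₁ᵢ)`, in terms of the pairs `(u₁,u₂)`, `(v₁,v₂)`. -/
def sympInner (n : ℕ) (p q : R2 n × R2 n) : ZMod 2 :=
  ∑ i ∈ Finset.range n,
    ((repP p.1).coeff i * (repP q.2).coeff i + (repP p.2).coeff i * (repP q.1).coeff i)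

/-- Euclidean dual of a set of (pairs representing) binary vectors of length `2n`. -/
def eucDual (n : ℕ) (S : Set (R2 n × R2 n)) : Set (R2 n × R2 n) :=
  {p | ∀ q ∈ S, eucInner n q p = 0}

/-- Symplectic dual of a set of (pairs representing) vectors of `𝔽₄ⁿ`. -/
def sympDual (n : ℕ) (S : Set (R2 n × R2 n)) : Set (R2 n × R2 n) :=
  {p | ∀ q ∈ S, sympInner n q p = 0}

/-- Number of nonzero `𝔽₄`-coordinates of `u₁ + w·u₂`, in terms of the pair `(u₁,u₂)`. -/
def wt4 (n : ℕ) (p : R2 n × R2 n) : ℕ := ((repP p.1).support ∪ (repP p.2).support).card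

/-- The `2n` binary coordinates of a pair `(u₁,u₂)`. -/
def coords {n : ℕ} (p : R2 n × R2 n) : (Fin n ⊕ Fin n) → ZMod 2 :=
  Sum.elim (fun i => (repP p.1).coeff i) (fun i => (repP p.2).coeff i)

/-- Vertex set of the Tanner graph: check vertices `x_t` (left) and data vertices
`q_s`, `q'_s` (right). -/
def TV (n : ℕ) : Type := (ZMod n) ⊕ ((ZMod n) ⊕ (ZMod n))

/-- `trel a b v w` holds iff `v` is a check vertex `x_t`, `w` is a data vertex, and they are
connected: `x_t ~ q_s` iff `a_{s−t} = 1`, and `x_t ~ q'_s` iff `b_{s−t} = 1`. -/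
def trel {n : ℕ} (a b : R2 n) (v w : TV n) : Prop :=
  ∃ t s : ZMod n, v = Sum.inl t ∧
    ((w = Sum.inr (Sum.inl s) ∧ coeffZ a (s - t) = 1) ∨
     (w = Sum.inr (Sum.inr s) ∧ coeffZ b (s - t) = 1))

/-- The Tanner graph `T(a,b)` of the GB code of `(a,b)`. -/
def tanner (n : ℕ) (a b : R2 n) : SimpleGraph (TV n) where
  Adj v w := trel a b v w ∨ trel a b w v
  symm := ⟨fun v w h => Or.symm h⟩
  loopless := by
    refine ⟨?_⟩
    rintro v (⟨t, s, hv, hw⟩ | ⟨t, s, hv, hw⟩) <;>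
      rcases hw with ⟨hw, -⟩ | ⟨hw, -⟩ <;> (subst hv; simp at hw)

end

noncomputable section

/-! Put `b = d/2`, `m = d + 1 = 2b + 1` and `j = b - 1`; all that matters about `n` is that
`n = m j + b + 1`. Cutting the exponents `0, …, n - 1` into blocks of length `m` gives both formulas
for `P_n`; they hold in every commutative semiring. When `xⁿ = 1`, moreover
`P_m · (1 + x^m + ⋯ + x^{mj}) = P_{n+b} = P_n + P_b` and `x P_n = P_n`, hence `P_m Q = 2 P_n - 1`,
which is `1` in characteristic two. The exponents in `Q` are distinct and less than `n` because they
lie in two different residue classes modulo `m`, so the weight of `Q` is the number of its terms. -/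

section GeomSum

open Finset

lemma geom_sum_range_add {A : Type*} [Semiring A] (x : A) (a b : ℕ) :
    ∑ i ∈ range (a + b), x ^ i = ∑ i ∈ range a, x ^ i + x ^ a * ∑ i ∈ range b, x ^ i := by
  simp only [sum_range_add, pow_add, mul_sum]

lemma pow_mul_geom_sum_of_pow_eq_one {A : Type*} [Ring A] {x : A} {n : ℕ} (hx : x ^ n = 1)
    (c : ℕ) :
    x ^ c * ∑ i ∈ range n, x ^ i = ∑ i ∈ range n, x ^ i := by
  have h := geom_sum_range_add x n c
  rw [add_comm n c, geom_sum_range_add, hx, one_mul, add_comm] at h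
  exact add_right_cancel h

section CommSemiring

variable {A : Type*} [CommSemiring A] (x : A)

lemma geom_sum_range_mul (m j : ℕ) :
    ∑ i ∈ range (m * j), x ^ i = (∑ i ∈ range m, x ^ i) * ∑ i ∈ range j, x ^ (m * i) := by
  induction j with
  | zero => simp
  | succ j ih =>
    rw [Nat.mul_succ, geom_sum_range_add, ih, sum_range_succ, mul_add, mul_comm (x ^ _)]

lemma geom_sum_range_mul_add (m j a : ℕ) :
    ∑ i ∈ range (m * j + a), x ^ i =
      (∑ i ∈ range m, x ^ i) * (x ^ a * ∑ i ∈ range j, x ^ (m * i)) + ∑ i ∈ range a, x ^ i := by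
  rw [add_comm, geom_sum_range_add, geom_sum_range_mul]
  ring

/- Each block of length `a + b` splits into its first `a` and its last `b` exponents; the final,
incomplete block has only the first part. -/
lemma geom_sum_range_add_mul_add (a b j : ℕ) :
    ∑ i ∈ range ((a + b) * j + a), x ^ i =
      (∑ i ∈ range a, x ^ i) * ∑ i ∈ range (j + 1), x ^ ((a + b) * i) +
        x ^ a * (∑ i ∈ range b, x ^ i) * ∑ i ∈ range j, x ^ ((a + b) * i) := by
  rw [geom_sum_range_add, geom_sum_range_mul, geom_sum_range_add x a b, sum_range_succ]
  ring

end CommSemiring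

lemma geom_sum_mul_add_eq_two_mul_sub {A : Type*} [CommRing A] {x : A} {n : ℕ} (b c j : ℕ)
    (hn : n = (2 * b + c) * j + (b + c)) (hx : x ^ n = 1) :
    (∑ i ∈ range (2 * b + c), x ^ i) *
        (x ^ c * ∑ i ∈ range (j + 1), x ^ ((2 * b + c) * i) +
          x ^ (b + c) * ∑ i ∈ range j, x ^ ((2 * b + c) * i)) =
      2 * ∑ i ∈ range n, x ^ i - ∑ i ∈ range c, x ^ i := by
  have long_progression : (∑ i ∈ range (2 * b + c), x ^ i) *
      ∑ i ∈ range (j + 1), x ^ ((2 * b + c) * i) =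
        ∑ i ∈ range n, x ^ i + ∑ i ∈ range b, x ^ i := by
    rw [← geom_sum_range_mul, show (2 * b + c) * (j + 1) = n + b by rw [hn]; ring,
      geom_sum_range_add, hx, one_mul]
  have short_progression := geom_sum_range_mul_add x (2 * b + c) j (b + c)
  rw [← hn] at short_progression
  have split := geom_sum_range_add x c b
  rw [add_comm c b] at split
  linear_combination x ^ c * long_progression - short_progression - split +
    pow_mul_geom_sum_of_pow_eq_one hx c

end GeomSum

section ArithProg

open Finset

/-- The set of exponents `{c, c + m, …, c + m (j - 1)}` of the polynomial
`x^c · (1 + x^m + ⋯ + x^{m(j-1)})`. -/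
def arithProg (c m j : ℕ) : Finset ℕ := (range j).image fun i => c + m * i

variable {c c' m j n : ℕ}

lemma injective_add_mul (c : ℕ) (hm : 0 < m) : Function.Injective fun i => c + m * i :=
  (add_right_injective c).comp (mul_right_injective₀ hm.ne')

lemma card_arithProg (c j : ℕ) (hm : 0 < m) : (arithProg c m j).card = j := by
  rw [arithProg, card_image_of_injective _ (injective_add_mul c hm), card_range]

lemma sum_pow_arithProg {A : Type*} [Semiring A] (x : A) (c j : ℕ) (hm : 0 < m) :
    ∑ e ∈ arithProg c m j, x ^ e = x ^ c * ∑ i ∈ range j, x ^ (m * i) := by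
  rw [arithProg, sum_image (injective_add_mul c hm).injOn]
  simp only [pow_add, mul_sum]

lemma disjoint_arithProg (h : ¬ c ≡ c' [MOD m]) (j j' : ℕ) :
    Disjoint (arithProg c m j) (arithProg c' m j') := by
  simp only [arithProg, disjoint_left, mem_image]
  rintro _ ⟨i, -, rfl⟩ ⟨i', -, heq⟩
  exact h (by simpa [Nat.ModEq] using congrArg (· % m) heq.symm)

lemma lt_of_mem_arithProg (h : c + m * j < n + m) {e : ℕ} (he : e ∈ arithProg c m j) : e < n := by
  obtain ⟨i, hi, rfl⟩ := mem_image.1 he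
  have : m * (i + 1) ≤ m * j := Nat.mul_le_mul_left m (mem_range.1 hi)
  rw [mul_add_one] at this
  omega

end ArithProg

section Weight

open Finset

variable {n : ℕ}

lemma support_sum_X_pow {A : Type*} [Semiring A] [Nontrivial A] (T : Finset ℕ) :
    (∑ e ∈ T, X ^ e : A[X]).support = T := by
  ext e
  simp [coeff_X_pow]

lemma repP_mkR_of_degree_lt {p : (ZMod 2)[X]} (hp : p.degree < n) : repP (mkR n p) = p := by
  rcases n.eq_zero_or_pos with rfl | hn
  · simp_all [repP, Nat.WithBot.lt_zero_iff]
  · have hmonic : (X ^ n - 1 : (ZMod 2)[X]).Monic := monic_X_pow_sub_C 1 hn.ne'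
    have hdeg : (X ^ n - 1 : (ZMod 2)[X]).degree = n := degree_X_pow_sub_C hn 1
    rw [repP, dif_neg hn.ne', mkR, AdjoinRoot.modByMonicHom_mk,
      (modByMonic_eq_self_iff hmonic).2 (hdeg ▸ hp)]

lemma wt_sum_xR_pow {T : Finset ℕ} (hT : ∀ e ∈ T, e < n) : wt (∑ e ∈ T, xR n ^ e) = T.card := by
  have hmk : ∑ e ∈ T, xR n ^ e = mkR n (∑ e ∈ T, X ^ e) := by simp [mkR, xR]
  have hdeg : (∑ e ∈ T, X ^ e : (ZMod 2)[X]).degree < n := by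
    rw [degree_lt_iff_coeff_zero]
    intro e hne
    rw [← notMem_support_iff, support_sum_X_pow]
    exact fun he => (hT e he).not_ge hne
  rw [wt, hmk, repP_mkR_of_degree_lt hdeg, support_sum_X_pow]

lemma wt_add_of_not_modEq {c c' m j j' : ℕ} (hm : 0 < m) (hcc' : ¬ c ≡ c' [MOD m])
    (hj : c + m * j < n + m) (hj' : c' + m * j' < n + m) :
    wt (xR n ^ c * ∑ i ∈ range j, xR n ^ (m * i) + xR n ^ c' * ∑ i ∈ range j', xR n ^ (m * i)) =
      j + j' := by
  have hdisj := disjoint_arithProg hcc' j j'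
  rw [← sum_pow_arithProg _ c j hm, ← sum_pow_arithProg _ c' j' hm, ← sum_union hdisj,
    wt_sum_xR_pow, card_union_of_disjoint hdisj, card_arithProg c j hm, card_arithProg c' j' hm]
  intro e he
  exact (mem_union.1 he).elim (lt_of_mem_arithProg hj) (lt_of_mem_arithProg hj')

end Weight

theorem stmt_12_general (b j n : ℕ) (hb : 0 < b) (hn : n = (2 * b + 1) * j + (b + 1)) (Q : R2 n)
    (hQ : Q = xR n * (∑ i ∈ Finset.range (j + 1), xR n ^ ((2 * b + 1) * i)) +
        xR n ^ (b + 1) * (∑ i ∈ Finset.range j, xR n ^ ((2 * b + 1) * i))) :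
    (PmR n (2 * b + 1) * Q = 1 ∧ wt Q = 2 * j + 1) ∧
    (PmR n n = PmR n (2 * b + 1) *
        (xR n ^ (b + 1) * ∑ i ∈ Finset.range j, xR n ^ ((2 * b + 1) * i)) +
        ∑ i ∈ Finset.range (b + 1), xR n ^ i) ∧
    (PmR n n = Q * (∑ i ∈ Finset.range b, xR n ^ i) +
        ∑ i ∈ Finset.range (j + 1), xR n ^ ((2 * b + 1) * i)) := by
  refine ⟨⟨?_, ?_⟩, ?_, ?_⟩
  · have h := geom_sum_mul_add_eq_two_mul_sub b 1 j hn (xR_pow_n n)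
    rw [two_mul (∑ i ∈ _, _), ZModModule.add_self, zero_sub, geom_sum_one,
      ZModModule.neg_eq_self, pow_one, ← hQ] at h
    exact h
  · have hmod : ¬ 1 ≡ b + 1 [MOD 2 * b + 1] := fun h => by
      have := h.eq_of_lt_of_lt (by omega) (by omega)
      omega
    have h := wt_add_of_not_modEq (n := n) (j := j + 1) (j' := j) (by omega) hmod
      (by rw [mul_add_one]; omega) (by omega)
    rw [pow_one, ← hQ] at h
    omega
  · have h := geom_sum_range_mul_add (xR n) (2 * b + 1) j (b + 1)
    rwa [← hn] at h
  · have h := geom_sum_range_add_mul_add (xR n) (b + 1) b j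
    rw [show b + 1 + b = 2 * b + 1 by ring, ← hn, geom_sum_succ] at h
    rw [PmR, h, hQ]
    ring

/-- For even `d > 0` and `n = d²/2` (i.e. `2n = d²`), in
`R = 𝔽₂[x]/(xⁿ−1)`:
(1) `P_{d+1}(x)` is a unit with inverse
`Q = x·(1 + x^{d+1} + ⋯ + x^{(d/2−1)(d+1)}) + x^{d/2+1}·(1 + x^{d+1} + ⋯ + x^{(d/2−2)(d+1)})`
and `wt(Q) = d − 1`;
(2) `P_n = P_{d+1}·x^{d/2+1}·(1 + x^{d+1} + ⋯ + x^{(d/2−2)(d+1)}) + (1 + x + ⋯ + x^{d/2})`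
and `P_n = P_{d+1}⁻¹·(1 + x + ⋯ + x^{d/2−1}) + (1 + x^{d+1} + ⋯ + x^{(d/2−1)(d+1)})` in `R`. -/
theorem stmt_12 (d n : ℕ) (hd : Even d) (hd0 : 0 < d) (hn : 2 * n = d ^ 2)
    (Q : R2 n)
    (hQ : Q = xR n * (∑ i ∈ Finset.range (d / 2), xR n ^ ((d + 1) * i)) +
        xR n ^ (d / 2 + 1) * (∑ i ∈ Finset.range (d / 2 - 1), xR n ^ ((d + 1) * i))) :
    (PmR n (d + 1) * Q = 1 ∧ wt Q = d - 1) ∧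
    (PmR n n = PmR n (d + 1) *
        (xR n ^ (d / 2 + 1) * ∑ i ∈ Finset.range (d / 2 - 1), xR n ^ ((d + 1) * i)) +
        ∑ i ∈ Finset.range (d / 2 + 1), xR n ^ i) ∧
    (PmR n n = Q * (∑ i ∈ Finset.range (d / 2), xR n ^ i) +
        ∑ i ∈ Finset.range (d / 2), xR n ^ ((d + 1) * i)) := by
  obtain ⟨j, rfl⟩ : ∃ j, d = 2 * (j + 1) := ⟨d / 2 - 1, by grind⟩
  rw [Nat.mul_div_cancel_left _ two_pos, add_tsub_cancel_right] at hQ ⊢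
  exact stmt_12_general (j + 1) j n j.succ_pos (by linarith) Q hQ

end
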